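/- arXiv:1805.09970 — 5 statements merged into one kernel-verified Lean document; each statement's English description precedes it below -/
import Mathlib

section
/- Let i ∈ {1, …, N−1} and k, l with k ≤ i < i+1 ≤ l ≤ N. If ε_{i,2} + ε_{i+1,1} = 1 (so that β_{i,2} β_{i+1,1} = −α_{i,2} α_{i+1,1}) and det T_l^{(i+2)} · det T_{i−1}^{(k)} ≥ 0 (with the conventions det T_{k−1}^{(k)} = 1, det T_l^{(l+1)} = 1, det T_l^{(m)} = 0 for m ≥ l+2), then det T_l^{(k)} ≥ det T̃, where T̃ is T_l^{(k)} with the (i, i+1) entry replaced by α_{i,2} and the (i+1, i) entry replaced by α_{i+1,1}. -/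
/-!
The determinant of a tridiagonal matrix obeys a three-term recurrence, and therefore splits at
any bond `(i, i+1)`:
`det T_l^{(k)} = det T_i^{(k)} det T_l^{(i+1)} - β_{i,2} β_{i+1,1} det T_{i-1}^{(k)} det T_l^{(i+2)}`.
None of the four smaller determinants involves the entries `β_{i,2}` and `β_{i+1,1}`, so replacing
them by their absolute values changes only the product in the second term, from
`-α_{i,2} α_{i+1,1}` to `α_{i,2} α_{i+1,1}`. The difference of the two determinants is thus
`2 α_{i,2} α_{i+1,1} det T_{i-1}^{(k)} det T_l^{(i+2)} ≥ 0`.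

The recurrence (`detT_rec`) comes from Laplace expansion along the first row and then the first
column; the splitting (`detT_split`) is a two-step downward induction on `k`, started at
`k = i + 1` and `k = i`, where the conventions for empty and negative-size matrices supply the
initial values.
-/

/-- The `(l−k+1)×(l−k+1)` tridiagonal matrix `T_l^{(k)}` with rows and columns indexed by
`j, s ∈ {k,…,l}` (realized as `Fin (l+1−k)`, the index `j : Fin (l+1−k)` corresponding to
`k + j`), whose `(j,s)` entry is `β1 j` if `s = j−1`, `1` if `s = j`, `β2 j` if `s = j+1`,
and `0` otherwise. -/
def triMat (β1 β2 : ℕ → ℝ) (k l : ℕ) : Matrix (Fin (l + 1 - k)) (Fin (l + 1 - k)) ℝ :=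
  Matrix.of fun j s =>
    if k + (s : ℕ) + 1 = k + (j : ℕ) then β1 (k + (j : ℕ))
    else if (s : ℕ) = (j : ℕ) then 1
    else if k + (s : ℕ) = k + (j : ℕ) + 1 then β2 (k + (j : ℕ))
    else 0

/-- `det T_l^{(k)}`, with the conventions `det T_l^{(l+1)} = 1` (the determinant of the empty
matrix) and `det T_l^{(m)} = 0` for `m ≥ l+2`. -/
noncomputable def detT (β1 β2 : ℕ → ℝ) (k l : ℕ) : ℝ :=
  if l + 2 ≤ k then 0 else (triMat β1 β2 k l).det

/-- The `n × n` tridiagonal matrix whose first row has index `k`, parametrized by its size instead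
of its last index. -/
def triSize (β1 β2 : ℕ → ℝ) (k n : ℕ) : Matrix (Fin n) (Fin n) ℝ :=
  Matrix.of fun j s =>
    if k + (s : ℕ) + 1 = k + (j : ℕ) then β1 (k + (j : ℕ))
    else if (s : ℕ) = (j : ℕ) then 1
    else if k + (s : ℕ) = k + (j : ℕ) + 1 then β2 (k + (j : ℕ))
    else 0

lemma triSize_submatrix_succ (β1 β2 : ℕ → ℝ) (k n : ℕ) :
    (triSize β1 β2 k (n + 1)).submatrix Fin.succ Fin.succ = triSize β1 β2 (k + 1) n := by
  ext a b
  have e : k + ((a : ℕ) + 1) = k + 1 + a := by omega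
  simp only [triSize, Matrix.submatrix_apply, Matrix.of_apply, Fin.val_succ, e]
  congr 1
  · simp only [eq_iff_iff]; omega
  congr 1
  · simp only [eq_iff_iff]; omega
  congr 1
  simp only [eq_iff_iff]; omega

lemma triSize_det_rec (β1 β2 : ℕ → ℝ) (k n : ℕ) :
    (triSize β1 β2 k (n + 2)).det
      = (triSize β1 β2 (k + 1) (n + 1)).det
        - β2 k * β1 (k + 1) * (triSize β1 β2 (k + 2) n).det := by
  -- The minor deleting row `0` and column `1` has a single nonzero entry in its first column.
  have hminor : ((triSize β1 β2 k (n + 2)).submatrix Fin.succ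
      (Fin.succAbove (Fin.succ 0))).det = β1 (k + 1) * (triSize β1 β2 (k + 2) n).det := by
    rw [Matrix.det_succ_column_zero, Fin.sum_univ_succ]
    have hz : ∀ x : Fin n, (triSize β1 β2 k (n + 2)).submatrix Fin.succ
        (Fin.succAbove (Fin.succ 0)) x.succ 0 = 0 := by
      intro x
      have e : k ≠ k + ((x : ℕ) + 1 + 1) + 1 := by omega
      simp [triSize, Fin.succAbove, e]
    have hs : ((triSize β1 β2 k (n + 2)).submatrix Fin.succ
        (Fin.succAbove (Fin.succ 0))).submatrix (Fin.succAbove 0) Fin.succ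
        = triSize β1 β2 (k + 2) n := by
      rw [← triSize_submatrix_succ, ← triSize_submatrix_succ]
      ext a b
      simp [Fin.succAbove, Fin.lt_def]
    have h0 : (triSize β1 β2 k (n + 2)).submatrix Fin.succ
        (Fin.succAbove (Fin.succ 0)) 0 0 = β1 (k + 1) := by
      simp [triSize, Fin.succAbove]
    rw [Finset.sum_eq_zero (fun x _ => by rw [hz]; ring), hs, h0]
    simp
  have h00 : triSize β1 β2 k (n + 2) 0 0 = 1 := by simp [triSize]
  have h01 : triSize β1 β2 k (n + 2) 0 (Fin.succ 0) = β2 k := by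
    have e : k + 1 + 1 ≠ k := by omega
    simp [triSize, e]
  have h0z : ∀ x : Fin n, triSize β1 β2 k (n + 2) 0 x.succ.succ = 0 := by
    intro x
    have e : k + ((x : ℕ) + 1 + 1) + 1 ≠ k := by omega
    simp [triSize, e]
  rw [Matrix.det_succ_row_zero, Fin.sum_univ_succ, Fin.sum_univ_succ, hminor,
    Finset.sum_eq_zero (fun x _ => by rw [h0z]; ring), Fin.succAbove_zero,
    triSize_submatrix_succ, h00, h01]
  simp
  ring

/-- The case `k = l` is included: there `detT (k + 2) l = 0` by convention. -/
lemma detT_rec (β1 β2 : ℕ → ℝ) (k l : ℕ) (h : k ≤ l) :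
    detT β1 β2 k l
      = detT β1 β2 (k + 1) l - β2 k * β1 (k + 1) * detT β1 β2 (k + 2) l := by
  have hD : ∀ m n, m + n = l + 1 → detT β1 β2 m l = (triSize β1 β2 m n).det := by
    intro m n hmn
    obtain rfl : n = l + 1 - m := by omega
    rw [detT, if_neg (by omega)]
    rfl
  obtain ⟨d, rfl⟩ := Nat.exists_eq_add_of_le h
  rcases d with _ | d
  · rw [hD k 1 (by omega), hD (k + 1) 0 (by omega)]
    simp [detT, triSize]
  · rw [hD k (d + 2) (by omega), hD (k + 1) (d + 1) (by omega), hD (k + 2) d (by omega),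
      triSize_det_rec]

lemma detT_empty (β1 β2 : ℕ → ℝ) (l : ℕ) : detT β1 β2 (l + 1) l = 1 := by
  rw [detT, if_neg (by omega)]
  have : IsEmpty (Fin (l + 1 - (l + 1))) := by
    rw [Nat.sub_self]; infer_instance
  exact Matrix.det_isEmpty

/-- Only `β_{j,1}` with `k < j ≤ l` and `β_{j,2}` with `k ≤ j < l` enter `det T_l^{(k)}`. -/
lemma detT_congr {β1 β2 γ1 γ2 : ℕ → ℝ} {k l : ℕ}
    (h1 : ∀ j, k < j → j ≤ l → β1 j = γ1 j) (h2 : ∀ j, k ≤ j → j < l → β2 j = γ2 j) :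
    detT β1 β2 k l = detT γ1 γ2 k l := by
  unfold detT
  split_ifs with h
  · rfl
  congr 1
  ext a b
  have ha := a.2
  have hb := b.2
  simp only [triMat, Matrix.of_apply]
  split_ifs with c1 c2 c3
  · exact h1 _ (by omega) (by omega)
  · rfl
  · exact h2 _ (by omega) (by omega)
  · rfl

/-- Splitting of the determinant at the bond between `p + 1` and `p + 2`. The index `i = p + 1`
avoids truncated subtraction in `i - 1`; the value `k = p + 2` is allowed so that the induction
has two initial cases. -/
lemma detT_split (β1 β2 : ℕ → ℝ) (p l : ℕ) (hl : p + 2 ≤ l) (k : ℕ) (hk : k ≤ p + 2) :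
    detT β1 β2 k l = detT β1 β2 k (p + 1) * detT β1 β2 (p + 2) l
      - β2 (p + 1) * β1 (p + 2) * (detT β1 β2 k p * detT β1 β2 (p + 3) l) := by
  have hzero : ∀ m, detT β1 β2 (m + 2) m = 0 := fun m => by simp [detT]
  obtain ⟨d, hd⟩ := Nat.exists_eq_add_of_le hk
  induction d using Nat.strong_induction_on generalizing k with
  | _ d ih =>
    match d, ih, hd with
    | 0, _, hd =>
      obtain rfl : k = p + 2 := by omega
      rw [detT_empty, hzero]
      ring
    | 1, _, hd =>
      obtain rfl : k = p + 1 := by omega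
      rw [detT_rec β1 β2 (p + 1) l (by omega), detT_rec β1 β2 (p + 1) (p + 1) le_rfl,
        detT_empty, detT_empty, hzero]
      ring
    | d + 2, ih, hd =>
      rw [detT_rec β1 β2 k l (by omega), detT_rec β1 β2 k (p + 1) (by omega),
        detT_rec β1 β2 k p (by omega),
        ih (d + 1) (by omega) (k + 1) (by omega) (by omega),
        ih d (by omega) (k + 2) (by omega) (by omega)]
      ring

/-- Let `i ∈ {1,…,N−1}` and `k, l` with `k ≤ i < i+1 ≤ l ≤ N`.  If
`ε_{i,2} + ε_{i+1,1} = 1` (so that `β_{i,2} β_{i+1,1} = −α_{i,2} α_{i+1,1}`) and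
`det T_l^{(i+2)} · det T_{i−1}^{(k)} ≥ 0` (with the conventions `det T_{k−1}^{(k)} = 1`,
`det T_l^{(l+1)} = 1`, `det T_l^{(m)} = 0` for `m ≥ l+2`), then `det T_l^{(k)} ≥ det T̃`, where
`T̃` is `T_l^{(k)}` with the `(i, i+1)` entry replaced by `α_{i,2}` and the `(i+1, i)` entry
replaced by `α_{i+1,1}`. -/
theorem detT_odd_sign_monotone (N : ℕ) (hN : 2 ≤ N)
    (β1 β2 α1 α2 : ℕ → ℝ) (ε1 ε2 : ℕ → ℕ)
    (hε1 : ∀ j, ε1 j = 0 ∨ ε1 j = 1) (hε2 : ∀ j, ε2 j = 0 ∨ ε2 j = 1)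
    (hα1 : ∀ j, 0 ≤ α1 j) (hα2 : ∀ j, 0 ≤ α2 j)
    (hβ1 : ∀ j, β1 j = (-1 : ℝ) ^ (ε1 j) * α1 j)
    (hβ2 : ∀ j, β2 j = (-1 : ℝ) ^ (ε2 j) * α2 j)
    (hα1' : α1 1 = 0) (hα2' : α2 N = 0)
    (i k l : ℕ) (hi : 1 ≤ i) (hki : k ≤ i) (hil : i + 1 ≤ l) (hl : l ≤ N) (hk : 1 ≤ k)
    (hodd : ε2 i + ε1 (i + 1) = 1)
    (hprod : 0 ≤ detT β1 β2 (i + 2) l * detT β1 β2 k (i - 1)) :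
    detT (Function.update β1 (i + 1) (α1 (i + 1))) (Function.update β2 i (α2 i)) k l
      ≤ detT β1 β2 k l := by
  obtain ⟨p, rfl⟩ : ∃ p, i = p + 1 := ⟨i - 1, by omega⟩
  have hne1 : ∀ j, j ≠ p + 2 →
      Function.update β1 (p + 1 + 1) (α1 (p + 1 + 1)) j = β1 j :=
    fun j hj => Function.update_of_ne hj _ _
  have hne2 : ∀ j, j ≠ p + 1 → Function.update β2 (p + 1) (α2 (p + 1)) j = β2 j :=
    fun j hj => Function.update_of_ne hj _ _
  have hsign : β2 (p + 1) * β1 (p + 2) = -(α2 (p + 1) * α1 (p + 2)) := by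
    have hpow : (-1 : ℝ) ^ ε2 (p + 1) * (-1) ^ ε1 (p + 2) = -1 := by
      rw [← pow_add, hodd, pow_one]
    rw [hβ1, hβ2]
    linear_combination (α2 (p + 1) * α1 (p + 2)) * hpow
  have hprod' : 0 ≤ detT β1 β2 (p + 3) l * detT β1 β2 k p := hprod
  rw [detT_split _ _ p l hil k (by omega), detT_split β1 β2 p l hil k (by omega),
    detT_congr (k := k) (l := p + 1) (γ1 := β1) (γ2 := β2)
      (fun j _ _ => hne1 j (by omega)) (fun j _ _ => hne2 j (by omega)),
    detT_congr (k := p + 2) (l := l) (γ1 := β1) (γ2 := β2)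
      (fun j _ _ => hne1 j (by omega)) (fun j _ _ => hne2 j (by omega)),
    detT_congr (k := k) (l := p) (γ1 := β1) (γ2 := β2)
      (fun j _ _ => hne1 j (by omega)) (fun j _ _ => hne2 j (by omega)),
    detT_congr (k := p + 3) (l := l) (γ1 := β1) (γ2 := β2)
      (fun j _ _ => hne1 j (by omega)) (fun j _ _ => hne2 j (by omega)),
    hsign, Function.update_self, Function.update_self]
  have := mul_nonneg (mul_nonneg (hα2 (p + 1)) (hα1 (p + 2))) hprod'
  linarith
end

section
/- For every 1 ≤ k ≤ l ≤ N and every choice of τ_k, …, τ_l ∈ [0,1], the determinant of the tridiagonal matrix T̄_l^{(k)} (with unit diagonal, subdiagonal entries τ_j and superdiagonal entries 1−τ_j) is nonnegative: det T̄_l^{(k)} ≥ 0. -/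
/-- The tridiagonal matrix of `triMat`, parametrized by its first index `k` and its size `n`
instead of by its first and last indices. -/
def triBlock (β1 β2 : ℕ → ℝ) (k n : ℕ) : Matrix (Fin n) (Fin n) ℝ :=
  Matrix.of fun j s =>
    if k + (s : ℕ) + 1 = k + (j : ℕ) then β1 (k + (j : ℕ))
    else if (s : ℕ) = (j : ℕ) then 1
    else if k + (s : ℕ) = k + (j : ℕ) + 1 then β2 (k + (j : ℕ))
    else 0

lemma triBlock_submatrix_succ (β1 β2 : ℕ → ℝ) (k n : ℕ) :
    (triBlock β1 β2 k (n + 1)).submatrix Fin.succ Fin.succ = triBlock β1 β2 (k + 1) n := by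
  ext i j
  have e : k + ((i : ℕ) + 1) = k + 1 + i := by ring
  simp only [triBlock, Matrix.submatrix_apply, Matrix.of_apply, Fin.val_succ, e]
  congr 1
  · apply propext; omega
  · congr 1
    · apply propext; omega
    · congr 1
      apply propext; omega

/-- The minor obtained by deleting the first row and the second column: its first column has
`β1 (k + 1)` as its only nonzero entry. -/
lemma det_triBlock_minor_one (β1 β2 : ℕ → ℝ) (k n : ℕ) :
    ((triBlock β1 β2 k (n + 2)).submatrix Fin.succ (Fin.succAbove 1)).det =
      β1 (k + 1) * (triBlock β1 β2 (k + 2) n).det := by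
  have hminor : (((triBlock β1 β2 k (n + 2)).submatrix Fin.succ (Fin.succAbove 1)).submatrix
      (Fin.succAbove 0) Fin.succ) = triBlock β1 β2 (k + 2) n := by
    rw [← triBlock_submatrix_succ β1 β2 (k + 1), ← triBlock_submatrix_succ β1 β2 k]
    ext i j
    have e : Fin.succAbove (1 : Fin (n + 2)) j.succ = j.succ.succ := by
      rw [← Fin.succ_zero_eq_one, Fin.succ_succAbove_succ, Fin.succAbove_zero]
    simp only [Matrix.submatrix_apply, Fin.succAbove_zero, e]
  rw [Matrix.det_succ_column_zero, Fin.sum_univ_succ, Finset.sum_eq_zero, hminor]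
  · simp [triBlock]
  · intro i _
    have hz : (triBlock β1 β2 k (n + 2)).submatrix Fin.succ (Fin.succAbove 1) i.succ 0 = 0 := by
      simp [triBlock]
      omega
    rw [hz]
    ring

/-- The continuant recurrence. -/
lemma det_triBlock_add_two (β1 β2 : ℕ → ℝ) (k n : ℕ) :
    (triBlock β1 β2 k (n + 2)).det = (triBlock β1 β2 (k + 1) (n + 1)).det -
      β2 k * (β1 (k + 1) * (triBlock β1 β2 (k + 2) n).det) := by
  rw [Matrix.det_succ_row_zero, Fin.sum_univ_succ, Fin.sum_univ_succ, Finset.sum_eq_zero,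
    Fin.succ_zero_eq_one, det_triBlock_minor_one, Fin.succAbove_zero, triBlock_submatrix_succ]
  · have h0 : triBlock β1 β2 k (n + 2) 0 0 = 1 := by simp [triBlock]
    have h1 : triBlock β1 β2 k (n + 2) 0 1 = β2 k := by
      simp [triBlock]
      omega
    rw [h0, h1]
    simp
    ring
  · intro i _
    have hz : triBlock β1 β2 k (n + 2) 0 i.succ.succ = 0 := by
      simp [triBlock]
      omega
    rw [hz]
    ring

/-- The induction on the size: with `D_k` the determinant of the block of first index `k`,
`0 ≤ D_{k+1}` and `τ_k D_{k+1} ≤ D_k`. The second bound is what the recurrence propagates. -/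
lemma det_triBlock_bounds (τ : ℕ → ℝ) (n : ℕ) : ∀ k : ℕ,
    (∀ j, k ≤ j → j ≤ k + n → τ j ∈ Set.Icc (0 : ℝ) 1) →
    0 ≤ (triBlock τ (fun j => 1 - τ j) (k + 1) n).det ∧
      τ k * (triBlock τ (fun j => 1 - τ j) (k + 1) n).det ≤
        (triBlock τ (fun j => 1 - τ j) k (n + 1)).det := by
  induction n with
  | zero =>
    intro k h
    have := (h k le_rfl (by omega)).2
    simpa [triBlock] using this
  | succ n ih =>
    intro k h
    obtain ⟨h0, h1⟩ := ih (k + 1) fun j h1 h2 => h j (by omega) (by omega)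
    have hk := h k le_rfl (by omega)
    have hk1 := h (k + 1) (by omega) (by omega)
    refine ⟨(mul_nonneg hk1.1 h0).trans h1, ?_⟩
    rw [det_triBlock_add_two]
    linarith [mul_le_mul_of_nonneg_left h1 (sub_nonneg.2 hk.2)]

/-- For every `1 ≤ k ≤ l ≤ N` and every choice of `τ_k, …, τ_l ∈ [0,1]`, the
determinant of the tridiagonal matrix `T̄_l^{(k)}` (with unit diagonal, subdiagonal entries
`τ_j` and superdiagonal entries `1−τ_j`) is nonnegative. -/
theorem detTbar_nonneg (N : ℕ) (hN : 2 ≤ N) (k l : ℕ) (hk : 1 ≤ k) (hkl : k ≤ l) (hl : l ≤ N)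
    (τ : ℕ → ℝ) (hτ : ∀ j, k ≤ j → j ≤ l → τ j ∈ Set.Icc (0 : ℝ) 1) :
    0 ≤ (triMat τ (fun j => 1 - τ j) k l).det := by
  obtain ⟨n, rfl⟩ := Nat.exists_eq_add_of_le hkl
  have e : k + n + 1 - k = n + 1 := by omega
  have h : (triMat τ (fun j => 1 - τ j) k (k + n)).det =
      (triBlock τ (fun j => 1 - τ j) k (n + 1)).det := by
    rw [← e]
    rfl
  obtain ⟨h0, h1⟩ := det_triBlock_bounds τ n k hτ
  rw [h]
  exact (mul_nonneg (hτ k le_rfl hkl).1 h0).trans h1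
end

section
/- For every 1 ≤ k < l ≤ N and every choice of τ_{k+1}, …, τ_{l−1} ∈ [0,1], if τ_k = 0 and τ_l = 1 then the tridiagonal matrix T̄_l^{(k)} is singular: det T̄_l^{(k)}(0, τ_{k+1}, …, τ_{l−1}, 1) = 0. -/
/-- For every `1 ≤ k < l ≤ N` and every choice of `τ_{k+1}, …, τ_{l−1} ∈ [0,1]`,
if `τ_k = 0` and `τ_l = 1` then the tridiagonal matrix `T̄_l^{(k)}` is singular:
`det T̄_l^{(k)}(0, τ_{k+1}, …, τ_{l−1}, 1) = 0`. -/
theorem detTbar_singular (N : ℕ) (hN : 2 ≤ N) (k l : ℕ) (hk : 1 ≤ k) (hkl : k < l) (hl : l ≤ N)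
    (τ : ℕ → ℝ) (hτ : ∀ j, k ≤ j → j ≤ l → τ j ∈ Set.Icc (0 : ℝ) 1)
    (hτk : τ k = 0) (hτl : τ l = 1) :
    (triMat τ (fun j => 1 - τ j) k l).det = 0 := by
  obtain ⟨n, rfl⟩ : ∃ n, l = k + (n + 1) := ⟨l - k - 1, by omega⟩
  have h_size : 0 < k + (n + 1) + 1 - k := by omega
  refine Matrix.exists_mulVec_eq_zero_iff.mp ⟨fun s => (-1 : ℝ) ^ (s : ℕ), ?_, ?_⟩
  · intro h
    simpa using congrFun h ⟨0, h_size⟩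
  ext j
  have hj := j.isLt
  -- Sum over `ℕ` rather than `Fin`, so that the three bands become three indicator sums.
  have h_sum : ∀ s : ℕ,
      (if k + s + 1 = k + (j : ℕ) then τ (k + j) else if s = (j : ℕ) then 1
        else if k + s = k + (j : ℕ) + 1 then 1 - τ (k + j) else 0) * (-1 : ℝ) ^ s
      = (if s = (j : ℕ) then (-1 : ℝ) ^ (j : ℕ) else 0)
        - (if s + 1 = (j : ℕ) then τ (k + j) * (-1 : ℝ) ^ (j : ℕ) else 0)
        - (if s = (j : ℕ) + 1 then (1 - τ (k + j)) * (-1 : ℝ) ^ (j : ℕ) else 0) := by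
    intro s
    rcases eq_or_ne (s + 1) (j : ℕ) with h | h
    · rw [if_pos (by omega), if_neg (by omega), if_pos h, if_neg (by omega), ← h, pow_succ]
      ring
    rw [if_neg (by omega), if_neg h]
    rcases eq_or_ne s (j : ℕ) with h' | h'
    · rw [if_pos h', if_pos h', if_neg (by omega), h']
      ring
    rw [if_neg h', if_neg h']
    rcases eq_or_ne s ((j : ℕ) + 1) with h'' | h''
    · rw [if_pos (by omega), if_pos h'', h'', pow_succ]
      ring
    · rw [if_neg (by omega), if_neg h'']
      ring
  simp only [Matrix.mulVec, dotProduct, triMat, Matrix.of_apply, h_sum, Pi.zero_apply]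
  rw [Fin.sum_univ_eq_sum_range (fun s : ℕ =>
        (if s = (j : ℕ) then (-1 : ℝ) ^ (j : ℕ) else 0)
        - (if s + 1 = (j : ℕ) then τ (k + j) * (-1 : ℝ) ^ (j : ℕ) else 0)
        - (if s = (j : ℕ) + 1 then (1 - τ (k + j)) * (-1 : ℝ) ^ (j : ℕ) else 0)),
    Finset.sum_sub_distrib, Finset.sum_sub_distrib, Finset.sum_ite_eq' , Finset.sum_ite_eq',
    if_pos (Finset.mem_range.2 hj)]
  -- In row `k` the subdiagonal sum is empty, but its coefficient `τ k` vanishes.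
  have h_sub : ∑ s ∈ Finset.range (k + (n + 1) + 1 - k),
      (if s + 1 = (j : ℕ) then τ (k + j) * (-1 : ℝ) ^ (j : ℕ) else 0)
      = τ (k + j) * (-1 : ℝ) ^ (j : ℕ) := by
    rcases Nat.eq_zero_or_pos (j : ℕ) with h | h
    · simp [h, hτk]
    · rw [Finset.sum_eq_single ((j : ℕ) - 1), if_pos (by omega)]
      · intro s _ hs
        exact if_neg (by omega)
      · intro hs
        exact absurd (Finset.mem_range.2 (by omega)) hs
  -- In row `l` the superdiagonal sum is empty, but its coefficient `1 - τ l` vanishes.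
  have h_super : (if (j : ℕ) + 1 ∈ Finset.range (k + (n + 1) + 1 - k)
      then (1 - τ (k + j)) * (-1 : ℝ) ^ (j : ℕ) else 0)
      = (1 - τ (k + j)) * (-1 : ℝ) ^ (j : ℕ) := by
    split_ifs with h
    · rfl
    · rw [Finset.mem_range] at h
      rw [show k + (j : ℕ) = k + (n + 1) by omega, hτl]
      ring
  rw [h_sub, h_super]
  ring
end

section
/- Let 1 ≤ k < l ≤ N and suppose there exist τ_k, …, τ_l ∈ [0,1] such that 0 ≤ α_{j,2} < 1 − τ_j and 0 ≤ α_{j+1,1} < τ_{j+1} for every j = k, …, l−1. Then the chain of inequalities det T_l^{(k)} ≥ det T_{l,0}^{(k)} > det T̄_l^{(k)} ≥ 0 holds, where T_{l,0}^{(k)} is T_l^{(k)} with all off-diagonal entries replaced by their absolute values (β_{j,1}, β_{j,2} replaced by α_{j,1}, α_{j,2}), and T̄_l^{(k)} is the tridiagonal matrix with unit diagonal, subdiagonal entries τ_j and superdiagonal entries 1−τ_j. -/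
theorem triBlock_succ (β1 β2 : ℕ → ℝ) (k n : ℕ) (i j : Fin n) :
    triBlock β1 β2 k (n + 1) i.succ j.succ = triBlock β1 β2 (k + 1) n i j := by
  have h : k + ((i : ℕ) + 1) = k + 1 + i := by ring
  simp only [triBlock, Matrix.of_apply, Fin.val_succ, h]
  congr 1
  · exact propext (by omega)
  · congr 1
    · exact propext (by omega)
    · congr 1
      exact propext (by omega)

/-- The three-term recursion for continuants, by expansion along the first row. -/
theorem det_triBlock_succ_succ (β1 β2 : ℕ → ℝ) (k n : ℕ) :
    (triBlock β1 β2 k (n + 2)).det = (triBlock β1 β2 (k + 1) (n + 1)).det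
      - β2 k * β1 (k + 1) * (triBlock β1 β2 (k + 2) n).det := by
  have h00 : triBlock β1 β2 k (n + 2) 0 0 = 1 := by simp [triBlock]
  have h01 : triBlock β1 β2 k (n + 2) 0 (Fin.succ 0) = β2 k := by
    simp [triBlock]
    omega
  have h0 : ∀ i : Fin n, triBlock β1 β2 k (n + 2) 0 i.succ.succ = 0 := by
    intro i
    simp [triBlock]
    omega
  have h10 : triBlock β1 β2 k (n + 2) (Fin.succ 0) 0 = β1 (k + 1) := by simp [triBlock]
  have hc : ∀ i : Fin n, triBlock β1 β2 k (n + 2) i.succ.succ 0 = 0 := by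
    intro i
    simp [triBlock]
    omega
  have m0 : (triBlock β1 β2 k (n + 2)).submatrix Fin.succ (Fin.succAbove 0)
      = triBlock β1 β2 (k + 1) (n + 1) := by
    ext i j
    simp [triBlock_succ]
  have m1 : ((triBlock β1 β2 k (n + 2)).submatrix Fin.succ (Fin.succAbove (Fin.succ 0))).det
      = β1 (k + 1) * (triBlock β1 β2 (k + 2) n).det := by
    have m : ((triBlock β1 β2 k (n + 2)).submatrix Fin.succ
        (Fin.succAbove (Fin.succ 0))).submatrix (Fin.succAbove 0) Fin.succ
        = triBlock β1 β2 (k + 2) n := by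
      ext i j
      simp only [Matrix.submatrix_apply, Fin.succ_succAbove_succ, Fin.succAbove_zero,
        triBlock_succ]
    rw [Matrix.det_succ_column_zero, Fin.sum_univ_succ, m]
    simp only [Matrix.submatrix_apply, Fin.succ_succAbove_zero, h10, hc]
    simp
  rw [Matrix.det_succ_row_zero, Fin.sum_univ_succ, Fin.sum_univ_succ, m0, m1, h00, h01]
  simp only [h0]
  simp
  ring

/-- The continuant recursion with `l` fixed, as a backward recursion for the sequence
`j ↦ det T_l^{(j)}`. -/
theorem det_triMat_rec (β1 β2 : ℕ → ℝ) (j l : ℕ) (hj : j + 1 ≤ l) :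
    (triMat β1 β2 j l).det = (triMat β1 β2 (j + 1) l).det
      - β2 j * β1 (j + 1) * (triMat β1 β2 (j + 2) l).det := by
  change (triBlock β1 β2 j (l + 1 - j)).det = (triBlock β1 β2 (j + 1) (l + 1 - (j + 1))).det
    - β2 j * β1 (j + 1) * (triBlock β1 β2 (j + 2) (l + 1 - (j + 2))).det
  obtain ⟨n, rfl⟩ := Nat.exists_eq_add_of_le hj
  rw [show j + 1 + n + 1 - j = n + 2 by omega, show j + 1 + n + 1 - (j + 1) = n + 1 by omega,
    show j + 1 + n + 1 - (j + 2) = n by omega]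
  exact det_triBlock_succ_succ β1 β2 j n

theorem det_triMat_self (β1 β2 : ℕ → ℝ) (l : ℕ) : (triMat β1 β2 l l).det = 1 := by
  change (triBlock β1 β2 l (l + 1 - l)).det = 1
  rw [show l + 1 - l = 1 by omega]
  simp [triBlock]

theorem det_triMat_succ_self (β1 β2 : ℕ → ℝ) (l : ℕ) : (triMat β1 β2 (l + 1) l).det = 1 := by
  change (triBlock β1 β2 (l + 1) (l + 1 - (l + 1))).det = 1
  rw [show l + 1 - (l + 1) = 0 by omega]
  simp

/-- Strengthening nonnegativity to `τ j * u (j + 1) ≤ u j` is what makes the backward induction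
close up. -/
theorem supersolution_nonneg {τ a u : ℕ → ℝ} {k l : ℕ}
    (hτ : ∀ j, k ≤ j → j ≤ l → τ j ∈ Set.Icc (0 : ℝ) 1)
    (ha : ∀ j, k ≤ j → j + 1 ≤ l → a j ≤ (1 - τ j) * τ (j + 1))
    (hu : ∀ j, k ≤ j → j + 1 ≤ l → u (j + 1) - a j * u (j + 2) ≤ u j)
    (h1 : 0 ≤ u (l + 1)) (h2 : τ l * u (l + 1) ≤ u l) (j : ℕ) (hkj : k ≤ j) (hjl : j ≤ l) :
    0 ≤ u (j + 1) ∧ τ j * u (j + 1) ≤ u j := by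
  induction hjl using Nat.decreasingInduction with
  | self => exact ⟨h1, h2⟩
  | of_succ j hj ih =>
    obtain ⟨i1, i2⟩ := ih (by omega)
    have t := hτ (j + 1) (by omega) hj
    have t' := hτ j hkj (by omega)
    refine ⟨(mul_nonneg t.1 i1).trans i2, ?_⟩
    have e1 := mul_le_mul_of_nonneg_right (ha j hkj hj) i1
    have e2 := mul_le_mul_of_nonneg_left i2 (sub_nonneg.2 t'.2)
    have e3 := hu j hkj hj
    simp only [add_assoc, Nat.reduceAdd] at *
    nlinarith

theorem supersolution_nonneg' {τ a u : ℕ → ℝ} {k l : ℕ}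
    (hτ : ∀ j, k ≤ j → j ≤ l → τ j ∈ Set.Icc (0 : ℝ) 1)
    (ha : ∀ j, k ≤ j → j + 1 ≤ l → a j ≤ (1 - τ j) * τ (j + 1))
    (hu : ∀ j, k ≤ j → j + 1 ≤ l → u (j + 1) - a j * u (j + 2) ≤ u j)
    (h1 : 0 ≤ u (l + 1)) (h2 : τ l * u (l + 1) ≤ u l) (j : ℕ) (hkj : k ≤ j) (hjl : j ≤ l + 1) :
    0 ≤ u j := by
  rcases Nat.lt_or_ge l j with h | h
  · rwa [show j = l + 1 by omega]
  · obtain ⟨i1, i2⟩ := supersolution_nonneg hτ ha hu h1 h2 j hkj h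
    exact (mul_nonneg (hτ j hkj h).1 i1).trans i2

/-- Strict inequality in the coefficient bound makes `u j - τ j * u (j + 1)` positive below `l`. -/
theorem solution_pos {τ a u : ℕ → ℝ} {k l : ℕ}
    (hτ : ∀ j, k ≤ j → j ≤ l → τ j ∈ Set.Icc (0 : ℝ) 1)
    (ha : ∀ j, k ≤ j → j + 1 ≤ l → a j < (1 - τ j) * τ (j + 1))
    (hu : ∀ j, k ≤ j → j + 1 ≤ l → u j = u (j + 1) - a j * u (j + 2))
    (h1 : u (l + 1) = 1) (h2 : u l = 1) (j : ℕ) (hkj : k ≤ j) (hjl : j ≤ l) :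
    0 < u j ∧ 0 < u (j + 1) := by
  induction hjl using Nat.decreasingInduction with
  | self => simp [h1, h2]
  | of_succ j hj ih =>
    obtain ⟨i1, i2⟩ := ih (by omega)
    refine ⟨?_, i1⟩
    have t := hτ j hkj (by omega)
    have e0 : τ l * u (l + 1) ≤ u l := by
      rw [h1, h2, mul_one]
      exact (hτ l (by omega) le_rfl).2
    have e1 := (supersolution_nonneg hτ (fun j h h' => (ha j h h').le)
      (fun j h h' => (hu j h h').ge) (by simp [h1]) e0 (j + 1) (by omega) hj).2
    have e2 := mul_le_mul_of_nonneg_left e1 (sub_nonneg.2 t.2)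
    have e3 := mul_lt_mul_of_pos_right (ha j hkj hj) i2
    have e4 := mul_nonneg t.1 i1.le
    rw [hu j hkj hj]
    simp only [add_assoc, Nat.reduceAdd] at *
    nlinarith


/-- Let `1 ≤ k < l ≤ N` and suppose there exist `τ_k, …, τ_l ∈ [0,1]` such that
`0 ≤ α_{j,2} < 1 − τ_j` and `0 ≤ α_{j+1,1} < τ_{j+1}` for every `j = k, …, l−1`.  Then the chain
of inequalities `det T_l^{(k)} ≥ det T_{l,0}^{(k)} > det T̄_l^{(k)} ≥ 0` holds, where
`T_{l,0}^{(k)}` is `T_l^{(k)}` with all off-diagonal entries replaced by their absolute values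
(`β_{j,1}, β_{j,2}` replaced by `α_{j,1}, α_{j,2}`), and `T̄_l^{(k)}` is the tridiagonal matrix
with unit diagonal, subdiagonal entries `τ_j` and superdiagonal entries `1−τ_j`. -/
theorem detT_chain_of_inequalities (N : ℕ) (hN : 2 ≤ N)
    (β1 β2 α1 α2 : ℕ → ℝ) (ε1 ε2 : ℕ → ℕ)
    (hε1 : ∀ j, ε1 j = 0 ∨ ε1 j = 1) (hε2 : ∀ j, ε2 j = 0 ∨ ε2 j = 1)
    (hα1 : ∀ j, 0 ≤ α1 j) (hα2 : ∀ j, 0 ≤ α2 j)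
    (hβ1 : ∀ j, β1 j = (-1 : ℝ) ^ (ε1 j) * α1 j)
    (hβ2 : ∀ j, β2 j = (-1 : ℝ) ^ (ε2 j) * α2 j)
    (hα1' : α1 1 = 0) (hα2' : α2 N = 0)
    (k l : ℕ) (hk : 1 ≤ k) (hkl : k < l) (hl : l ≤ N)
    (τ : ℕ → ℝ) (hτ : ∀ j, k ≤ j → j ≤ l → τ j ∈ Set.Icc (0 : ℝ) 1)
    (hbound : ∀ j, k ≤ j → j + 1 ≤ l → α2 j < 1 - τ j ∧ α1 (j + 1) < τ (j + 1)) :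
    detT α1 α2 k l ≤ detT β1 β2 k l
      ∧ (triMat τ (fun j => 1 - τ j) k l).det < detT α1 α2 k l
      ∧ 0 ≤ (triMat τ (fun j => 1 - τ j) k l).det := by
  have hlt : ∀ j, k ≤ j → j + 1 ≤ l → α2 j * α1 (j + 1) < (1 - τ j) * τ (j + 1) := fun j h h' =>
    mul_lt_mul'' (hbound j h h').1 (hbound j h h').2 (hα2 j) (hα1 (j + 1))
  have hle : ∀ j, β2 j * β1 (j + 1) ≤ α2 j * α1 (j + 1) := by
    intro j
    have hp := mul_nonneg (hα2 j) (hα1 (j + 1))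
    rw [hβ2, hβ1]
    rcases hε2 j with h | h <;> rcases hε1 (j + 1) with h' | h' <;> rw [h, h'] <;> simp <;> linarith
  have hτl : τ l ≤ 1 := (hτ l hkl.le le_rfl).2
  have nonneg : ∀ b1 b2 : ℕ → ℝ,
      (∀ j, k ≤ j → j + 1 ≤ l → b2 j * b1 (j + 1) ≤ (1 - τ j) * τ (j + 1)) →
      ∀ j, k ≤ j → j ≤ l + 1 → 0 ≤ (triMat b1 b2 j l).det := fun b1 b2 hb =>
    supersolution_nonneg' (u := fun j => (triMat b1 b2 j l).det) hτ hb
      (fun j _ h' => (det_triMat_rec b1 b2 j l h').ge) (by simp [det_triMat_succ_self])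
      (by simpa [det_triMat_succ_self, det_triMat_self] using hτl)
  -- The difference of two solutions is a supersolution for the larger coefficients.
  have compare : ∀ b1 b2 a1 a2 : ℕ → ℝ,
      (∀ j, k ≤ j → j + 1 ≤ l → b2 j * b1 (j + 1) ≤ a2 j * a1 (j + 1)) →
      (∀ j, k ≤ j → j + 1 ≤ l → a2 j * a1 (j + 1) ≤ (1 - τ j) * τ (j + 1)) →
      ∀ j, k ≤ j → j ≤ l →
        0 ≤ (triMat b1 b2 (j + 1) l).det - (triMat a1 a2 (j + 1) l).det ∧
        τ j * ((triMat b1 b2 (j + 1) l).det - (triMat a1 a2 (j + 1) l).det)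
          ≤ (triMat b1 b2 j l).det - (triMat a1 a2 j l).det := by
    intro b1 b2 a1 a2 hba ha
    refine supersolution_nonneg (u := fun j => (triMat b1 b2 j l).det - (triMat a1 a2 j l).det)
      hτ ha (fun j h h' => ?_) (by simp [det_triMat_succ_self])
      (by simp [det_triMat_succ_self, det_triMat_self])
    have hX := nonneg b1 b2 (fun j h h' => (hba j h h').trans (ha j h h')) (j + 2)
      (by omega) (by omega)
    have e := mul_le_mul_of_nonneg_right (hba j h h') hX
    rw [det_triMat_rec b1 b2 j l h', det_triMat_rec a1 a2 j l h']
    linarith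
  have hdet : ∀ b1 b2, detT b1 b2 k l = (triMat b1 b2 k l).det := fun b1 b2 =>
    if_neg (by omega)
  rw [hdet, hdet]
  refine ⟨?_, ?_, nonneg _ _ (fun j _ _ => le_rfl) k le_rfl (by omega)⟩
  · obtain ⟨i1, i2⟩ := compare β1 β2 α1 α2 (fun j _ _ => hle j) (fun j h h' => (hlt j h h').le)
      k le_rfl hkl.le
    have := mul_nonneg (hτ k le_rfl hkl.le).1 i1
    linarith
  · have hc := compare α1 α2 τ (fun j => 1 - τ j) (fun j h h' => (hlt j h h').le)
      (fun j _ _ => le_rfl)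
    obtain ⟨i1, -⟩ := hc k le_rfl hkl.le
    obtain ⟨i2, i3⟩ := hc (k + 1) (by omega) hkl
    have t := hτ k le_rfl hkl.le
    have hpos := (solution_pos (u := fun j => (triMat α1 α2 j l).det) hτ hlt
      (fun j _ h' => det_triMat_rec α1 α2 j l h') (det_triMat_succ_self ..) (det_triMat_self ..)
      (k + 1) (by omega) hkl).2
    -- The gap between the coefficients at `k`, times `det T_{l,0}^{(k+2)} > 0`, gives strictness.
    have e1 := mul_lt_mul_of_pos_right (hlt k le_rfl hkl) hpos
    have e2 := mul_le_mul_of_nonneg_left i3 (sub_nonneg.2 t.2)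
    have e3 := mul_nonneg t.1 i1
    rw [det_triMat_rec α1 α2 k l hkl, det_triMat_rec τ (fun j => 1 - τ j) k l hkl]
    nlinarith
end

section
/- Let 1 ≤ k ≤ l ≤ N and suppose there exist τ_k, …, τ_l ∈ [0,1] such that 0 ≤ α_{j,2} < 1 − τ_j and 0 ≤ α_{j+1,1} < τ_{j+1} for every j = k, …, l−1. Then det T_l^{(k)} > 0; in particular all such tridiagonal matrices, and hence all leading principal minors of T_N^{(1)}, are nonsingular with positive determinant. -/
/-- A bound for the off-diagonal absolute row sums of `T_l^{(k)}`. The `if`s drop the entry to the left of the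
first column and the one to the right of the last column. -/
lemma sum_offDiag_triMat_le (β1 β2 : ℕ → ℝ) (k l : ℕ) (j : Fin (l + 1 - k)) :
    ∑ s ∈ Finset.univ.erase j, ‖triMat β1 β2 k l j s‖ ≤
      (if 0 < (j : ℕ) then |β1 (k + j)| else 0) +
        (if (j : ℕ) + 1 < l + 1 - k then |β2 (k + j)| else 0) := by
  have hl : ∑ s : Fin (l + 1 - k), (if (s : ℕ) + 1 = j then |β1 (k + j)| else 0) =
      if 0 < (j : ℕ) then |β1 (k + j)| else 0 := by
    split_ifs with h
    · rw [Finset.sum_eq_single ⟨(j : ℕ) - 1, by omega⟩]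
      · rw [if_pos (by simp only; omega)]
      · intro b _ hb
        rw [if_neg]
        intro h'
        exact hb (Fin.ext (by simp only; omega))
      · simp
    · exact Finset.sum_eq_zero fun s _ => if_neg (by omega)
  have hr : ∑ s : Fin (l + 1 - k), (if (s : ℕ) = j + 1 then |β2 (k + j)| else 0) =
      if (j : ℕ) + 1 < l + 1 - k then |β2 (k + j)| else 0 := by
    split_ifs with h
    · rw [Finset.sum_eq_single ⟨(j : ℕ) + 1, h⟩]
      · simp
      · intro b _ hb
        rw [if_neg]
        intro h'
        exact hb (Fin.ext h')
      · simp
    · exact Finset.sum_eq_zero fun s _ => if_neg (by omega)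
  rw [← hl, ← hr, ← Finset.sum_add_distrib]
  calc ∑ s ∈ Finset.univ.erase j, ‖triMat β1 β2 k l j s‖
      ≤ ∑ s ∈ Finset.univ.erase j, ((if (s : ℕ) + 1 = j then |β1 (k + j)| else 0) +
          (if (s : ℕ) = j + 1 then |β2 (k + j)| else 0)) := by
        refine Finset.sum_le_sum fun s hs => ?_
        have hne : (s : ℕ) ≠ j := fun h => (Finset.mem_erase.mp hs).1 (Fin.ext h)
        simp only [triMat, Matrix.of_apply, Real.norm_eq_abs, if_neg hne, add_assoc,
          Nat.add_left_cancel_iff]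
        split_ifs <;> first | omega | simp
    _ ≤ _ := by
        refine Finset.sum_le_sum_of_subset_of_nonneg (Finset.erase_subset _ _) fun s _ _ => ?_
        positivity

/-- Strict diagonal dominance, written as a bound on the two off-diagonal coefficients of each row,
forces a positive determinant. -/
lemma det_triMat_pos (β1 β2 : ℕ → ℝ) (k l : ℕ)
    (h : ∀ j : Fin (l + 1 - k), (if 0 < (j : ℕ) then |β1 (k + j)| else 0) +
        (if (j : ℕ) + 1 < l + 1 - k then |β2 (k + j)| else 0) < 1) :
    0 < (triMat β1 β2 k l).det := by
  -- The determinant along the path that scales the off-diagonal part by `t`.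
  set f : ℝ → ℝ := fun t => (triMat (fun i => t * β1 i) (fun i => t * β2 i) k l).det with hf
  have hcont : Continuous f := by
    refine Continuous.matrix_det (continuous_matrix fun i j => ?_)
    simp only [triMat, Matrix.of_apply]
    split_ifs <;> fun_prop
  have h0 : f 0 = 1 := by
    have : triMat (fun i => (0 : ℝ) * β1 i) (fun i => (0 : ℝ) * β2 i) k l = 1 := by
      ext i j
      simp only [triMat, Matrix.of_apply, Matrix.one_apply, Fin.ext_iff, zero_mul]
      split_ifs <;> first | omega | rfl
    simp only [hf, this, Matrix.det_one]
  have h1 : f 1 = (triMat β1 β2 k l).det := by simp [hf]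
  have hne : ∀ t ∈ Set.Icc (0 : ℝ) 1, f t ≠ 0 := by
    intro t ht
    refine det_ne_zero_of_sum_row_lt_diag fun j => ?_
    refine (sum_offDiag_triMat_le _ _ k l j).trans_lt ?_
    have hd : ‖triMat (fun i => t * β1 i) (fun i => t * β2 i) k l j j‖ = 1 := by
      simp [triMat]
    have hs : ∀ x : ℝ, |t * x| ≤ |x| := fun x => by
      rw [abs_mul, abs_of_nonneg ht.1]
      exact mul_le_of_le_one_left (abs_nonneg x) ht.2
    rw [hd]
    refine lt_of_le_of_lt (add_le_add ?_ ?_) (h j)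
    · split_ifs
      · exact hs _
      · exact le_rfl
    · split_ifs
      · exact hs _
      · exact le_rfl
  rw [← h1]
  by_contra! hle
  obtain ⟨t, ht, hft⟩ := intermediate_value_Icc' zero_le_one hcont.continuousOn
    (show (0 : ℝ) ∈ Set.Icc (f 1) (f 0) from ⟨hle, h0 ▸ zero_le_one⟩)
  exact hne t ht hft

/-- Let `1 ≤ k ≤ l ≤ N` and suppose there exist `τ_k, …, τ_l ∈ [0,1]` such that
`0 ≤ α_{j,2} < 1 − τ_j` and `0 ≤ α_{j+1,1} < τ_{j+1}` for every `j = k, …, l−1`.  Then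
`det T_l^{(k)} > 0`; in particular all such tridiagonal matrices, and hence all leading
principal minors of `T_N^{(1)}`, are nonsingular with positive determinant. -/
theorem detT_pos (N : ℕ) (hN : 2 ≤ N)
    (β1 β2 α1 α2 : ℕ → ℝ) (ε1 ε2 : ℕ → ℕ)
    (hε1 : ∀ j, ε1 j = 0 ∨ ε1 j = 1) (hε2 : ∀ j, ε2 j = 0 ∨ ε2 j = 1)
    (hα1 : ∀ j, 0 ≤ α1 j) (hα2 : ∀ j, 0 ≤ α2 j)
    (hβ1 : ∀ j, β1 j = (-1 : ℝ) ^ (ε1 j) * α1 j)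
    (hβ2 : ∀ j, β2 j = (-1 : ℝ) ^ (ε2 j) * α2 j)
    (hα1' : α1 1 = 0) (hα2' : α2 N = 0)
    (k l : ℕ) (hk : 1 ≤ k) (hkl : k ≤ l) (hl : l ≤ N)
    (hτ : ∃ τ : ℕ → ℝ, (∀ j, k ≤ j → j ≤ l → τ j ∈ Set.Icc (0 : ℝ) 1)
      ∧ ∀ j, k ≤ j → j + 1 ≤ l → α2 j < 1 - τ j ∧ α1 (j + 1) < τ (j + 1)) :
    0 < detT β1 β2 k l := by
  have hb1 : ∀ j, |β1 j| = α1 j := fun j => by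
    rw [hβ1, abs_mul, abs_neg_one_pow, one_mul, abs_of_nonneg (hα1 j)]
  have hb2 : ∀ j, |β2 j| = α2 j := fun j => by
    rw [hβ2, abs_mul, abs_neg_one_pow, one_mul, abs_of_nonneg (hα2 j)]
  obtain ⟨τ, hτ, hατ⟩ := hτ
  rw [detT, if_neg (by omega)]
  refine det_triMat_pos β1 β2 k l fun j => ?_
  rw [hb1, hb2]
  have hj := j.isLt
  have ht := hτ (k + j) (by omega) (by omega)
  have hleft : 0 < (j : ℕ) → α1 (k + j) < τ (k + j) := fun h => by
    have := (hατ (k + j - 1) (by omega) (by omega)).2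
    rwa [show k + (j : ℕ) - 1 + 1 = k + j by omega] at this
  have hright : (j : ℕ) + 1 < l + 1 - k → α2 (k + j) < 1 - τ (k + j) := fun h =>
    (hατ (k + j) (by omega) (by omega)).1
  split_ifs with h₁ h₂ h₂
  · linarith [hleft h₁, hright h₂]
  · linarith [hleft h₁, ht.2]
  · linarith [hright h₂, ht.1]
  · norm_num
end
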